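/- arXiv:0908.1688 — 2 statements merged into one kernel-verified Lean document; each statement's English description precedes it below -/
import Mathlib

section
/- Let k be a field of characteristic zero and let R₀ and R₁ be commutative algebras finitely generated over k such that R₀ and R₁ are normal integral domains, R₀ is a k-subalgebra of R₁ (i.e., the structure map R₀ → R₁ is an injective k-algebra homomorphism), and R₁ is finite as an R₀-module. Let I be an ideal of R₀ such that the quotient ring R₁/IR₁ is a normal integral domain. Then R₀/I is a normal integral domain. -/
theorem splitnormal_retract (R₀ R₁ : Type*) 
    [CommRing R₀] [CommRing R₁] [IsDomain R₀] [IsDomain R₁] [Algebra ℚ R₀]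
    [Algebra R₀ R₁] [IsIntegrallyClosed R₀] [IsIntegrallyClosed R₁]
    (hinj : Function.Injective (algebraMap R₀ R₁))
    [Module.Finite R₀ R₁] :
    ∃ T : R₁ →ₗ[R₀] R₀, ∀ x, T (algebraMap R₀ R₁ x) = x := by
  have : FaithfulSMul R₀ R₁ := (faithfulSMul_iff_algebraMap_injective R₀ R₁).2 hinj
  have : Module.IsTorsionFree R₀ R₁ := inferInstance
  have : Algebra.IsIntegral R₀ R₁ := inferInstance
  let : Algebra (FractionRing R₀) (FractionRing R₁) := FractionRing.liftAlgebra _ _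
  have : IsScalarTower R₀ (FractionRing R₀) (FractionRing R₁) :=
    FractionRing.isScalarTower_liftAlgebra _ _
  have : IsIntegralClosure R₁ R₀ (FractionRing R₁) :=
    IsIntegralClosure.of_isIntegrallyClosed _ _ _
  have : IsLocalization (Algebra.algebraMapSubmonoid R₁ (nonZeroDivisors R₀)) (FractionRing R₁) :=
    IsIntegralClosure.isLocalization _ (FractionRing R₀) _ _
  have : FiniteDimensional (FractionRing R₀) (FractionRing R₁) :=
    .of_isLocalization R₀ R₁ (nonZeroDivisors R₀)
  have : CharZero R₀ := algebraRat.charZero R₀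
  have hd : (Module.finrank (FractionRing R₀) (FractionRing R₁) : ℚ) ≠ 0 := by
    exact_mod_cast Module.finrank_pos.ne'
  set d := Module.finrank (FractionRing R₀) (FractionRing R₁) with hdd
  have key : ∀ x : R₀, Algebra.intTrace R₀ R₁ (algebraMap R₀ R₁ x) = (d : R₀) * x := by
    intro x
    apply IsFractionRing.injective R₀ (FractionRing R₀)
    rw [Algebra.algebraMap_intTrace (L := FractionRing R₁), ← IsScalarTower.algebraMap_apply,
      IsScalarTower.algebraMap_apply R₀ (FractionRing R₀) (FractionRing R₁),
      Algebra.trace_algebraMap]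
    simp [hdd]
  refine ⟨(algebraMap ℚ R₀ (d : ℚ)⁻¹) • Algebra.intTrace R₀ R₁, fun x => ?_⟩
  rw [LinearMap.smul_apply, key, smul_eq_mul, ← mul_assoc, ← map_natCast (algebraMap ℚ R₀) d,
    ← map_mul, inv_mul_cancel₀ hd, map_one, one_mul]

theorem splitnormal_closed (A B : Type*) [CommRing A] [CommRing B] [IsDomain A] [IsDomain B]
    [IsIntegrallyClosed B] (f : A →+* B) (hf : Function.Injective f)
    (h : ∀ a b : A, f b ∣ f a → b ∣ a) : IsIntegrallyClosed A := by
  rw [isIntegrallyClosed_iff (FractionRing A)]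
  intro x hx
  obtain ⟨a, b, hb, rfl⟩ := IsFractionRing.div_surjective (A := A) x
  have hb0 : b ≠ 0 := nonZeroDivisors.ne_zero hb
  have hfb : f b ≠ 0 := (map_ne_zero_iff f hf).2 hb0
  let g : FractionRing A →+* FractionRing B := IsFractionRing.map hf
  have hg : ∀ y, g (algebraMap A _ y) = algebraMap B _ (f y) := fun y => IsLocalization.map_eq _ _
  have hgx : IsIntegral B (g (algebraMap A _ a / algebraMap A _ b)) :=
    hx.map_of_comp_eq f g (by ext y; simp [hg])
  obtain ⟨c, hc⟩ := IsIntegrallyClosed.isIntegral_iff.1 hgx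
  have hfb' : algebraMap B (FractionRing B) (f b) ≠ 0 := by simpa using hfb
  have hb' : algebraMap A (FractionRing A) b ≠ 0 := by simpa using hb0
  rw [map_div₀, hg, hg, eq_div_iff hfb', ← map_mul] at hc
  have hc' := IsFractionRing.injective B (FractionRing B) hc
  obtain ⟨e, rfl⟩ := h a b ⟨c, by rw [← hc', mul_comm]⟩
  exact ⟨e, by rw [eq_div_iff hb', ← map_mul, mul_comm]⟩

/-- Lemma 4.5 (lem:splitnormal): if `R₀ ⊆ R₁` are finitely generated normal
domains over a field `k` of characteristic zero with `R₁` finite over `R₀`,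
and `I` is an ideal of `R₀` such that `R₁ ⧸ I·R₁` is a normal domain,
then `R₀ ⧸ I` is a normal domain. -/
theorem stmt_0 (k R₀ R₁ : Type*) [Field k] [CharZero k]
    [CommRing R₀] [CommRing R₁] [IsDomain R₀] [IsDomain R₁]
    [Algebra k R₀] [Algebra k R₁] [Algebra R₀ R₁] [IsScalarTower k R₀ R₁]
    [Algebra.FiniteType k R₀] [Algebra.FiniteType k R₁]
    [IsIntegrallyClosed R₀] [IsIntegrallyClosed R₁]
    (hinj : Function.Injective (algebraMap R₀ R₁))
    [Module.Finite R₀ R₁]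
    (I : Ideal R₀)
    (hdom : IsDomain (R₁ ⧸ I.map (algebraMap R₀ R₁)))
    (hnorm : IsIntegrallyClosed (R₁ ⧸ I.map (algebraMap R₀ R₁))) :
    IsDomain (R₀ ⧸ I) ∧ IsIntegrallyClosed (R₀ ⧸ I) := by
  let : Algebra ℚ R₀ := ((algebraMap k R₀).comp (algebraMap ℚ k)).toAlgebra
  obtain ⟨T, hT⟩ := splitnormal_retract R₀ R₁ hinj
  have hTI : ∀ y ∈ I.map (algebraMap R₀ R₁), T y ∈ I := by
    intro y hy
    induction hy using Submodule.span_induction with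
    | mem y hy => obtain ⟨x, hx, rfl⟩ := hy; rwa [hT]
    | zero => simp
    | add x y _ _ hx hy => rw [map_add]; exact I.add_mem hx hy
    | smul r y hy' _ =>
      rw [smul_eq_mul]
      clear * - hT hy'
      revert r
      induction hy' using Submodule.span_induction with
      | mem y hy =>
        obtain ⟨x, hx, rfl⟩ := hy
        intro r
        rw [mul_comm, ← Algebra.smul_def, map_smul]
        exact I.mul_mem_right _ hx
      | zero => simp
      | add x y _ _ hx hy => intro r; rw [mul_add, map_add]; exact I.add_mem (hx r) (hy r)
      | smul s y _ h => intro r; rw [smul_eq_mul, ← mul_assoc]; exact h _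
  have hle : I ≤ (I.map (algebraMap R₀ R₁)).comap (algebraMap R₀ R₁) := Ideal.le_comap_map
  let f : R₀ ⧸ I →+* R₁ ⧸ I.map (algebraMap R₀ R₁) := Ideal.quotientMap _ (algebraMap R₀ R₁) hle
  have hf : Function.Injective f := Ideal.quotientMap_injective' (fun x hx => by
    have := hTI _ hx
    rwa [hT] at this)
  have hA : IsDomain (R₀ ⧸ I) := hf.isDomain f
  refine ⟨hA, splitnormal_closed _ _ f hf ?_⟩
  intro a b
  obtain ⟨a, rfl⟩ := Ideal.Quotient.mk_surjective a
  obtain ⟨b, rfl⟩ := Ideal.Quotient.mk_surjective b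
  rintro ⟨c, hc⟩
  obtain ⟨c, rfl⟩ := Ideal.Quotient.mk_surjective c
  simp only [f, Ideal.quotientMap_mk] at hc
  rw [← map_mul, Ideal.Quotient.eq] at hc
  have := hTI _ hc
  rw [map_sub, hT, ← Algebra.smul_def, map_smul, smul_eq_mul] at this
  exact ⟨Ideal.Quotient.mk I (T c), by rw [← map_mul, Ideal.Quotient.eq]; exact this⟩
end

section
/- Let A be an integral domain with fraction field K, and let Ā be a subring of K containing (the canonical image of) A. If the inclusion A → Ā admits an A-linear retraction, i.e., an A-module homomorphism π : Ā → A restricting to the identity on A, then Ā equals A (every element of Ā lies in the image of A). -/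
set_option synthInstance.maxHeartbeats 1000000 in
/-- Final step of the proof of Lemma 4.5: a subring `Ā` of the fraction field
of a domain `A` containing `A` such that the inclusion `A → Ā` admits an
`A`-linear retraction must equal `A`. -/
theorem stmt_3 (A : Type*) [CommRing A] [IsDomain A]
    (S : Subalgebra A (FractionRing A))
    (π : S →ₗ[A] A) (hπ : ∀ a : A, π (algebraMap A S a) = a) :
    ∀ x ∈ S, ∃ a : A, algebraMap A (FractionRing A) a = x := by
  intro x hx
  obtain ⟨r, s, hs, hrs⟩ := IsFractionRing.div_surjective (A := A) x
  have hs0 : algebraMap A (FractionRing A) s ≠ 0 :=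
    IsFractionRing.to_map_ne_zero_of_mem_nonZeroDivisors hs
  have h1 : s • (⟨x, hx⟩ : S) = algebraMap A S r := by
    apply Subtype.ext
    change s • x = algebraMap A (FractionRing A) r
    rw [Algebra.smul_def, ← hrs]
    field_simp
  have h2 : s * π ⟨x, hx⟩ = r := by
    have h3 := congrArg π h1
    rw [map_smul, hπ, smul_eq_mul] at h3
    exact h3
  refine ⟨π ⟨x, hx⟩, ?_⟩
  refine Eq.trans ?_ hrs
  rw [eq_div_iff hs0, ← map_mul, mul_comm, h2]
end
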